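/- arXiv:1903.12567 — 2 statements merged into one kernel-verified Lean document; each statement's English description precedes it below -/
import Mathlib

section
/- The group G₁₂₀ is isomorphic to the quotient of the direct product B4 × ℤ² by the normal closure of the single element (((σ1*σ2*σ3)^4)⁻¹, u1*u2), where u1, u2 is the standard basis of ℤ² (corresponding to the generators c12, c21) and σ1, σ2, σ3 correspond to a1, b, a2. -/
/-- Braid relations of the braid group `B₄` on generators `σ1 = of 0`, `σ2 = of 1`,
`σ3 = of 2`. -/
def B4rels : Set (FreeGroup (Fin 3)) :=
  {FreeGroup.of 0 * FreeGroup.of 1 * FreeGroup.of 0 *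
      (FreeGroup.of 1 * FreeGroup.of 0 * FreeGroup.of 1)⁻¹,
   FreeGroup.of 1 * FreeGroup.of 2 * FreeGroup.of 1 *
      (FreeGroup.of 2 * FreeGroup.of 1 * FreeGroup.of 2)⁻¹,
   FreeGroup.of 0 * FreeGroup.of 2 * (FreeGroup.of 2 * FreeGroup.of 0)⁻¹}

/-- The braid group on 4 strands, as a presented group. -/
abbrev B4 : Type := PresentedGroup B4rels

namespace G120aux
/-- Generators of the Gervais presentation of `PMod(1,2,0)`:
`b = of 0`, `a1 = of 1`, `a2 = of 2`, `c12 = of 3`, `c21 = of 4`. -/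
def g (i : Fin 5) : FreeGroup (Fin 5) := FreeGroup.of i
/-- The relator expressing that `x` and `y` commute. -/
def comm (x y : FreeGroup (Fin 5)) : FreeGroup (Fin 5) := x * y * (y * x)⁻¹
/-- The relator expressing the braid relation `x y x = y x y`. -/
def braid (x y : FreeGroup (Fin 5)) : FreeGroup (Fin 5) := x * y * x * (y * x * y)⁻¹
end G120aux

open G120aux in
/-- The relations of the Gervais presentation of `PMod(1,2,0)`. -/
def G120rels : Set (FreeGroup (Fin 5)) :=
  {comm (g 1) (g 2), braid (g 1) (g 0), braid (g 2) (g 0),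
   comm (g 3) (g 1), comm (g 3) (g 2), comm (g 3) (g 0),
   comm (g 4) (g 1), comm (g 4) (g 2), comm (g 4) (g 0),
   comm (g 3) (g 4),
   g 3 * g 4 * ((g 1 * g 0 * g 2) ^ 4)⁻¹}

/-- The Gervais presentation of the pure mapping class group `PMod(1,2,0)`. -/
abbrev G120 : Type := PresentedGroup G120rels

/-- The standard basis of the free abelian group `ℤ²` (written multiplicatively). -/
def u (i : Fin 2) : Multiplicative (Fin 2 → ℤ) := Multiplicative.ofAdd (Pi.single i 1)

/-- The normal closure of the single element `(((σ1 σ2 σ3)^4)⁻¹, u₁ u₂)` in `B₄ × ℤ²`. -/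
def N : Subgroup (B4 × Multiplicative (Fin 2 → ℤ)) :=
  Subgroup.normalClosure
    {((((PresentedGroup.of 0 * PresentedGroup.of 1 * PresentedGroup.of 2 : B4) ^ 4)⁻¹),
      u 0 * u 1)}

instance : N.Normal := Subgroup.normalClosure_normal

/-!
`G₁₂₀` and `(B₄ × ℤ²) / N` have the same universal property: a homomorphism from either one to a
group `G` is a triple `t` in `G` satisfying the braid relations together with a commuting pair `c`
such that every `c j` commutes with every `t i` and `c 0 * c 1 = (t 0 * t 1 * t 2) ^ 4`.
The two homomorphisms this produces are mutually inverse because they are so on generators.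
-/

/-- The braid relation between two elements of a group or monoid, the analogue of `Commute` for
adjacent Artin generators. -/
def BraidRel {M : Type*} [Mul M] (x y : M) : Prop :=
  x * y * x = y * x * y

namespace BraidRel

variable {M N : Type*} [Mul M] [Mul N] {x y : M}

theorem symm (h : BraidRel x y) : BraidRel y x :=
  Eq.symm h

theorem map {F : Type*} [FunLike F M N] [MulHomClass F M N] (h : BraidRel x y) (f : F) :
    BraidRel (f x) (f y) := by
  simpa only [BraidRel, map_mul] using congrArg f h

end BraidRel

theorem lift_presentedGroup_of {α : Type*} (rels : Set (FreeGroup α)) :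
    FreeGroup.lift (PresentedGroup.of : α → PresentedGroup rels) = PresentedGroup.mk rels :=
  FreeGroup.ext_hom _ _ fun _ => FreeGroup.lift_apply_of

theorem monoidHom_prod_ext {M N P : Type*} [Monoid M] [Monoid N] [Monoid P] {f g : M × N →* P}
    (hl : f.comp (.inl M N) = g.comp (.inl M N)) (hr : f.comp (.inr M N) = g.comp (.inr M N)) :
    f = g := by
  rw [← MonoidHom.noncommCoprod_unique f, ← MonoidHom.noncommCoprod_unique g]
  simp only [hl, hr]

section Generators

variable {G H K : Type*} [Group G] [Group H] [Group K] {f : H →* G} {g : K →* G}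

theorem commute_map_of_closure_eq_top {S : Set H} (hS : Subgroup.closure S = ⊤) {z : G}
    (h : ∀ s ∈ S, Commute (f s) z) (x : H) : Commute (f x) z := by
  have closure_le : Subgroup.closure S ≤ (Subgroup.centralizer {z}).comap f :=
    (Subgroup.closure_le _).2 fun s hs => Subgroup.mem_centralizer_singleton_iff.2 (h s hs).eq
  exact Subgroup.mem_centralizer_singleton_iff.1 (closure_le (hS ▸ Subgroup.mem_top x))

theorem commute_map_map_of_closure_eq_top {S : Set H} {T : Set K}
    (hS : Subgroup.closure S = ⊤) (hT : Subgroup.closure T = ⊤)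
    (h : ∀ s ∈ S, ∀ t ∈ T, Commute (f s) (g t)) (x : H) (y : K) : Commute (f x) (g y) :=
  commute_map_of_closure_eq_top hS (fun s hs =>
    (commute_map_of_closure_eq_top hT (fun t ht => (h s hs t ht).symm) y).symm) x

theorem normalClosure_le_ker_noncommCoprod_iff (comm : ∀ x y, Commute (f x) (g y)) {h : H} {k : K} :
    Subgroup.normalClosure {(h⁻¹, k)} ≤ (f.noncommCoprod g comm).ker ↔ f h = g k := by
  rw [← Subgroup.normalClosure_subset_iff, Set.singleton_subset_iff, SetLike.mem_coe,
    MonoidHom.mem_ker, MonoidHom.noncommCoprod_apply, map_inv, inv_mul_eq_one]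

end Generators

section FreeAbelian

variable {ι G : Type*} [Group G]

theorem closure_range_ofAdd_single [Finite ι] [DecidableEq ι] :
    Subgroup.closure (Set.range fun i : ι => Multiplicative.ofAdd (Pi.single i (1 : ℤ))) = ⊤ := by
  have := Fintype.ofFinite ι
  refine eq_top_iff.2 fun v _ => ?_
  have eq_prod : v = ∏ i, Multiplicative.ofAdd (Pi.single i (1 : ℤ)) ^ v.toAdd i := by
    refine Multiplicative.toAdd.injective (funext fun j => ?_)
    simp [toAdd_prod, Pi.single_apply]
  rw [eq_prod]
  exact Subgroup.prod_mem _ fun i _ =>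
    Subgroup.zpow_mem _ (Subgroup.subset_closure (Set.mem_range_self i)) _

theorem commute_zpowersHom {x y : G} (h : Commute x y) (m n : Multiplicative ℤ) :
    Commute (zpowersHom G x m) (zpowersHom G y n) := by
  simpa only [zpowersHom_apply] using h.zpow_zpow _ _

/-- The homomorphism `v ↦ ∏ i, c i ^ v i` from the free abelian group on a finite type to an
arbitrary group, given by a family `c` of commuting elements. -/
def freeAbelianLift [Fintype ι] (c : ι → G) (hc : Pairwise fun i j => Commute (c i) (c j)) :
    Multiplicative (ι → ℤ) →* G :=
  (MonoidHom.noncommPiCoprod (fun i => zpowersHom G (c i)) <|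
    hc.mono fun _ _ => commute_zpowersHom).comp (MulEquiv.funMultiplicative ι ℤ).toMonoidHom

theorem freeAbelianLift_ofAdd_single [Fintype ι] [DecidableEq ι] (c : ι → G)
    (hc : Pairwise fun i j => Commute (c i) (c j)) (i : ι) :
    freeAbelianLift c hc (Multiplicative.ofAdd (Pi.single i 1)) = c i := by
  have funMultiplicative_single : MulEquiv.funMultiplicative ι ℤ
      (Multiplicative.ofAdd (Pi.single i 1)) = Pi.mulSingle i (Multiplicative.ofAdd 1) := by
    ext j
    simp [Pi.single_apply, Pi.mulSingle_apply, apply_ite]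
  rw [freeAbelianLift, MonoidHom.comp_apply, MulEquiv.coe_toMonoidHom, funMultiplicative_single,
    MonoidHom.noncommPiCoprod_mulSingle, zpowersHom_apply, toAdd_ofAdd, zpow_one]

end FreeAbelian

namespace B4

/-- The defining relations of `B4` for a triple of elements of a group or monoid; `t i` stands for
the generator `PresentedGroup.of i`. -/
structure Relations {M : Type*} [Mul M] (t : Fin 3 → M) : Prop where
  braid_zero_one : BraidRel (t 0) (t 1)
  braid_one_two : BraidRel (t 1) (t 2)
  commute_zero_two : Commute (t 0) (t 2)

theorem Relations.map {M M' F : Type*} [Mul M] [Mul M'] [FunLike F M M'] [MulHomClass F M M']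
    {t : Fin 3 → M} (h : Relations t) (f : F) : Relations fun i => f (t i) :=
  ⟨h.braid_zero_one.map f, h.braid_one_two.map f, h.commute_zero_two.map f⟩

variable {G : Type*} [Group G]

theorem forall_lift_eq_one_iff {t : Fin 3 → G} :
    (∀ r ∈ B4rels, FreeGroup.lift t r = 1) ↔ Relations t := by
  simp only [B4rels, Set.forall_mem_insert, Set.mem_singleton_iff, forall_eq, map_mul, map_inv,
    FreeGroup.lift_apply_of, mul_inv_eq_one]
  exact ⟨fun ⟨h₁, h₂, h₃⟩ => ⟨h₁, h₂, h₃⟩, fun ⟨h₁, h₂, h₃⟩ => ⟨h₁, h₂, h₃⟩⟩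

theorem relations_of : Relations (PresentedGroup.of : Fin 3 → B4) :=
  forall_lift_eq_one_iff.1 fun _ hr => by
    rw [lift_presentedGroup_of, PresentedGroup.one_of_mem hr]

/-- The homomorphism from `B4` determined by a triple satisfying its relations. -/
def lift {t : Fin 3 → G} (h : Relations t) : B4 →* G :=
  PresentedGroup.toGroup (forall_lift_eq_one_iff.2 h)

@[simp]
theorem lift_of {t : Fin 3 → G} (h : Relations t) (i : Fin 3) :
    lift h (PresentedGroup.of i) = t i :=
  PresentedGroup.toGroup.of _

end B4

/-- The relations of `G120` for elements of a group or monoid: `t` stands for `a1, b, a2` (in the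
order of `σ1, σ2, σ3` in `B4`) and `c` for `c12, c21`. -/
structure StarRelations {M : Type*} [Monoid M] (t : Fin 3 → M) (c : Fin 2 → M) : Prop where
  braid : B4.Relations t
  commute : ∀ i j, Commute (t i) (c j)
  pairwise_commute : Pairwise fun i j => Commute (c i) (c j)
  star : c 0 * c 1 = (t 0 * t 1 * t 2) ^ 4

namespace G120

variable {G : Type*} [Group G] {t : Fin 3 → G} {c : Fin 2 → G}

theorem lift_comm_eq_one_iff {s : Fin 5 → G} {i j : Fin 5} :
    FreeGroup.lift s (G120aux.comm (G120aux.g i) (G120aux.g j)) = 1 ↔ Commute (s i) (s j) := by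
  simp only [G120aux.comm, G120aux.g, map_mul, map_inv, FreeGroup.lift_apply_of, mul_inv_eq_one,
    commute_iff_eq]

theorem lift_braid_eq_one_iff {s : Fin 5 → G} {i j : Fin 5} :
    FreeGroup.lift s (G120aux.braid (G120aux.g i) (G120aux.g j)) = 1 ↔ BraidRel (s i) (s j) := by
  simp only [G120aux.braid, G120aux.g, map_mul, map_inv, FreeGroup.lift_apply_of, mul_inv_eq_one,
    BraidRel]

theorem lift_star_eq_one_iff {s : Fin 5 → G} :
    FreeGroup.lift s (G120aux.g 3 * G120aux.g 4 * ((G120aux.g 1 * G120aux.g 0 * G120aux.g 2) ^ 4)⁻¹)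
      = 1 ↔ s 3 * s 4 = (s 1 * s 0 * s 2) ^ 4 := by
  simp only [G120aux.g, map_mul, map_inv, map_pow, FreeGroup.lift_apply_of, mul_inv_eq_one]

theorem forall_lift_eq_one_iff {s : Fin 5 → G} :
    (∀ r ∈ G120rels, FreeGroup.lift s r = 1) ↔ StarRelations ![s 1, s 0, s 2] ![s 3, s 4] := by
  simp only [G120rels, Set.forall_mem_insert, Set.mem_singleton_iff, forall_eq,
    lift_comm_eq_one_iff, lift_braid_eq_one_iff, lift_star_eq_one_iff]
  constructor
  · rintro ⟨h12, h10, h20, h31, h32, h30, h41, h42, h40, h34, hstar⟩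
    refine ⟨⟨h10, h20.symm, h12⟩, ?_, ?_, hstar⟩
    · simp [Fin.forall_fin_succ, h31.symm, h32.symm, h30.symm, h41.symm, h42.symm, h40.symm]
    · simp [Pairwise, Fin.forall_fin_two, h34, h34.symm]
  · rintro ⟨⟨h10, h02, h12⟩, hcomm, hpair, hstar⟩
    exact ⟨h12, h10, h02.symm, (hcomm 0 0).symm, (hcomm 2 0).symm, (hcomm 1 0).symm,
      (hcomm 0 1).symm, (hcomm 2 1).symm, (hcomm 1 1).symm, hpair zero_ne_one, hstar⟩

theorem starRelations_of :
    StarRelations (M := G120) ![.of 1, .of 0, .of 2] ![.of 3, .of 4] :=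
  forall_lift_eq_one_iff.1 fun _ hr => by
    rw [lift_presentedGroup_of, PresentedGroup.one_of_mem hr]

/-- The homomorphism from `G120` determined by elements satisfying its relations; the reordering
of `t` reflects that `b, a1, a2` are the generators `0, 1, 2` of `G120`. -/
def lift (h : StarRelations t c) : G120 →* G :=
  PresentedGroup.toGroup (f := ![t 1, t 0, t 2, c 0, c 1]) <| forall_lift_eq_one_iff.2 <| by
    have ht : ![t 0, t 1, t 2] = t := FinVec.etaExpand_eq t
    have hc : ![c 0, c 1] = c := FinVec.etaExpand_eq c
    exact ht.symm ▸ hc.symm ▸ h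

@[simp]
theorem lift_of (h : StarRelations t c) (i : Fin 5) :
    lift h (PresentedGroup.of i) = ![t 1, t 0, t 2, c 0, c 1] i :=
  PresentedGroup.toGroup.of _

end G120

namespace N

variable {G : Type*} [Group G] {t : Fin 3 → G} {c : Fin 2 → G}

theorem le_ker_noncommCoprod_iff {f : B4 →* G} {g : Multiplicative (Fin 2 → ℤ) →* G}
    (comm : ∀ x v, Commute (f x) (g v)) :
    N ≤ (f.noncommCoprod g comm).ker ↔
      g (u 0) * g (u 1) = (f (.of 0) * f (.of 1) * f (.of 2)) ^ 4 := by
  rw [N, normalClosure_le_ker_noncommCoprod_iff, eq_comm]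
  simp only [map_mul, map_pow]

theorem starRelations_mk' :
    StarRelations (fun i => QuotientGroup.mk' N (PresentedGroup.of i, 1))
      (fun j => QuotientGroup.mk' N (1, u j)) where
  braid := B4.relations_of.map ((QuotientGroup.mk' N).comp (.inl _ _))
  commute i j := (MonoidHom.commute_inl_inr (PresentedGroup.of i) (u j)).map _
  pairwise_commute i j _ :=
    (Commute.all (u i) (u j)).map ((QuotientGroup.mk' N).comp (.inr _ _))
  star := by
    refine (le_ker_noncommCoprod_iff (f := (QuotientGroup.mk' N).comp (.inl _ _))
      (g := (QuotientGroup.mk' N).comp (.inr _ _))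
      fun x v => (MonoidHom.commute_inl_inr x v).map (QuotientGroup.mk' N)).1 ?_
    rw [MonoidHom.noncommCoprod_unique, QuotientGroup.ker_mk']

theorem commute_lift_freeAbelianLift (h : StarRelations t c) (x : B4)
    (v : Multiplicative (Fin 2 → ℤ)) :
    Commute (B4.lift h.braid x) (freeAbelianLift c h.pairwise_commute v) := by
  refine commute_map_map_of_closure_eq_top (PresentedGroup.closure_range_of B4rels)
    closure_range_ofAdd_single ?_ x v
  rintro _ ⟨i, rfl⟩ _ ⟨j, rfl⟩
  rw [B4.lift_of, freeAbelianLift_ofAdd_single]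
  exact h.commute i j

/-- The homomorphism from `(B4 × ℤ²) / N` determined by elements satisfying the relations of
`G120`. -/
def quotientLift (h : StarRelations t c) : (B4 × Multiplicative (Fin 2 → ℤ)) ⧸ N →* G :=
  QuotientGroup.lift N
    ((B4.lift h.braid).noncommCoprod (freeAbelianLift c h.pairwise_commute)
      (commute_lift_freeAbelianLift h))
    ((le_ker_noncommCoprod_iff _).2 <| by
      simpa only [u, freeAbelianLift_ofAdd_single, B4.lift_of] using h.star)

@[simp]
theorem quotientLift_mk_of (h : StarRelations t c) (i : Fin 3) :
    quotientLift h (QuotientGroup.mk (PresentedGroup.of i, 1)) = t i := by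
  simp [quotientLift]

@[simp]
theorem quotientLift_mk_u (h : StarRelations t c) (j : Fin 2) :
    quotientLift h (QuotientGroup.mk (1, u j)) = c j := by
  simp [quotientLift, u, freeAbelianLift_ofAdd_single]

theorem quotient_hom_ext {f g : (B4 × Multiplicative (Fin 2 → ℤ)) ⧸ N →* G}
    (hof : ∀ i, f (QuotientGroup.mk' N (.of i, 1)) = g (QuotientGroup.mk' N (.of i, 1)))
    (hu : ∀ j, f (QuotientGroup.mk' N (1, u j)) = g (QuotientGroup.mk' N (1, u j))) : f = g := by
  refine QuotientGroup.monoidHom_ext N (monoidHom_prod_ext (PresentedGroup.ext hof) ?_)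
  exact MonoidHom.eq_of_eqOn_dense closure_range_ofAdd_single (Set.forall_mem_range.2 hu)

end N

/-- The isomorphism `G120 ≃* (B4 × ℤ²) / N` obtained from the common universal property. -/
def G120.equivQuotient : G120 ≃* (B4 × Multiplicative (Fin 2 → ℤ)) ⧸ N :=
  MonoidHom.toMulEquiv (G120.lift N.starRelations_mk') (N.quotientLift G120.starRelations_of)
    (PresentedGroup.ext fun i => by fin_cases i <;> simp)
    (N.quotient_hom_ext (fun i => by fin_cases i <;> simp) (fun j => by fin_cases j <;> simp))

/-- Proposition 10: `PMod(1,2,0)` is isomorphic to `(B₄ × ℤ²)` modulo the single star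
relation `c12 c21 = (a1 b a2)^4`, with `a1, b, a2` corresponding to `σ1, σ2, σ3` and
`c12, c21` to the standard basis `u₁, u₂` of `ℤ²`. -/
theorem stmt_10 :
    ∃ e : G120 ≃* (B4 × Multiplicative (Fin 2 → ℤ)) ⧸ N,
      e (PresentedGroup.of 1) = QuotientGroup.mk' N (PresentedGroup.of 0, 1) ∧
      e (PresentedGroup.of 0) = QuotientGroup.mk' N (PresentedGroup.of 1, 1) ∧
      e (PresentedGroup.of 2) = QuotientGroup.mk' N (PresentedGroup.of 2, 1) ∧
      e (PresentedGroup.of 3) = QuotientGroup.mk' N (1, u 0) ∧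
      e (PresentedGroup.of 4) = QuotientGroup.mk' N (1, u 1) := by
  exact ⟨G120.equivQuotient, G120.lift_of N.starRelations_mk' 1, G120.lift_of N.starRelations_mk' 0,
    G120.lift_of N.starRelations_mk' 2, G120.lift_of N.starRelations_mk' 3,
    G120.lift_of N.starRelations_mk' 4⟩
end

section
/- The group homomorphism from the free abelian group ℤ² to G₁₂₀ sending the two standard basis elements to c12 and c21 (well defined since these two elements of G₁₂₀ commute) is injective; in particular c12 and c21 generate a free abelian subgroup of G₁₂₀ of rank 2. -/
/-!
Over a commutative group the braid relations force `b`, `a1`, `a2` to have a common image `t`, and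
the star relation becomes `c12 * c21 = t ^ 12`; hence `t` and the image of `c12` can be prescribed
arbitrarily. Prescribing `(1, 0)` and `(0, 1)` in `ℤ²` sends `c12` and `c21` to the linearly
independent vectors `(0, 1)` and `(12, -1)`, so already the abelianization of `G120` separates the
products `c12 ^ m * c21 ^ n`.
-/

section CommutingFamily

variable {ι G : Type*} [Group G]

theorem pairwise_commute_zpow {x : ι → G} (hx : Pairwise (Function.onFun Commute x)) (n : ι → ℤ) :
    Pairwise (Function.onFun Commute fun i => x i ^ n i) :=
  fun _ _ hij => (hx hij).zpow_zpow _ _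

variable [Fintype ι]

/-- The homomorphism from the free abelian group on `ι`, encoded as `Multiplicative (ι → ℤ)`, that
sends the standard basis to a family of pairwise commuting elements. -/
def commutingFamilyHom (x : ι → G) (hx : Pairwise (Function.onFun Commute x)) :
    Multiplicative (ι → ℤ) →* G :=
  (MonoidHom.noncommPiCoprod (fun i => zpowersHom G (x i))
    fun _ _ hij _ _ => (hx hij).zpow_zpow _ _).comp
    (MulEquiv.funMultiplicative ι ℤ).toMonoidHom

variable {x : ι → G} (hx : Pairwise (Function.onFun Commute x))

theorem commutingFamilyHom_ofAdd_single [DecidableEq ι] (i : ι) :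
    commutingFamilyHom x hx (Multiplicative.ofAdd (Pi.single i 1)) = x i := by
  have single_eq : MulEquiv.funMultiplicative ι ℤ (Multiplicative.ofAdd (Pi.single i 1)) =
      Pi.mulSingle i (Multiplicative.ofAdd 1) :=
    funext fun j => (Pi.mulSingle_multiplicativeOfAdd_eq i 1 j).symm
  rw [commutingFamilyHom, MonoidHom.comp_apply, MulEquiv.toMonoidHom_eq_coe, MonoidHom.coe_coe,
    single_eq]
  exact (MonoidHom.noncommPiCoprod_mulSingle _ i _).trans (zpow_one (x i))

theorem commutingFamilyHom_apply (v : Multiplicative (ι → ℤ)) :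
    commutingFamilyHom x hx v = Finset.univ.noncommProd (fun i => x i ^ v.toAdd i)
      ((pairwise_commute_zpow hx v.toAdd).set_pairwise _) :=
  rfl

theorem toAdd_map_commutingFamilyHom {A : Type*} [AddCommGroup A] (φ : G →* Multiplicative A)
    (v : Multiplicative (ι → ℤ)) :
    (φ (commutingFamilyHom x hx v)).toAdd =
      Fintype.linearCombination ℤ (fun i => (φ (x i)).toAdd) v.toAdd := by
  rw [commutingFamilyHom_apply, Finset.map_noncommProd, Finset.noncommProd_eq_prod]
  simp [Fintype.linearCombination_apply]

theorem commutingFamilyHom_injective {A : Type*} [AddCommGroup A] (φ : G →* Multiplicative A)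
    (hφ : LinearIndependent ℤ fun i => (φ (x i)).toAdd) :
    Function.Injective (commutingFamilyHom x hx) := by
  intro v w hvw
  apply Multiplicative.toAdd.injective
  apply linearIndependent_iff_injective_fintypeLinearCombination.mp hφ
  rw [← toAdd_map_commutingFamilyHom hx, ← toAdd_map_commutingFamilyHom hx, hvw]

end CommutingFamily

namespace G120

theorem commute_c12_c21 : Commute (PresentedGroup.of 3 : G120) (PresentedGroup.of 4) :=
  PresentedGroup.mk_eq_mk_of_mul_inv_mem
    (show G120aux.comm (G120aux.g 3) (G120aux.g 4) ∈ G120rels by simp [G120rels])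

section CommGroup

variable {A : Type*} [CommGroup A]

theorem map_comm (f : FreeGroup (Fin 5) →* A) (x y : FreeGroup (Fin 5)) :
    f (G120aux.comm x y) = 1 := by
  simp only [G120aux.comm, map_mul, map_inv, mul_comm (f y), mul_inv_cancel]

theorem map_braid (f : FreeGroup (Fin 5) →* A) (x y : FreeGroup (Fin 5)) :
    f (G120aux.braid x y) = f x * (f y)⁻¹ := by
  simp only [G120aux.braid, map_mul, map_inv]
  rw [mul_comm (f y) (f x), mul_inv, mul_mul_mul_comm, mul_inv_cancel, one_mul]

theorem lift_eq_one_of_mem_rels (t c : A) :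
    ∀ r ∈ G120rels, FreeGroup.lift ![t, t, t, c, t ^ 12 * c⁻¹] r = 1 := by
  have star : c * (t ^ 12 * c⁻¹) = (t * t * t) ^ 4 := by
    rw [mul_left_comm, mul_inv_cancel, mul_one, ← pow_three', ← pow_mul]
  simp [G120rels, map_comm, map_braid, G120aux.g, star]

/-- The homomorphism to a commutative group that sends `b`, `a1`, `a2` to `t` and `c12` to `c`. -/
def toCommGroup (t c : A) : G120 →* A :=
  PresentedGroup.toGroup (lift_eq_one_of_mem_rels t c)

theorem toCommGroup_c12 (t c : A) : toCommGroup t c (PresentedGroup.of 3) = c :=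
  PresentedGroup.toGroup.of _

theorem toCommGroup_c21 (t c : A) : toCommGroup t c (PresentedGroup.of 4) = t ^ 12 * c⁻¹ :=
  PresentedGroup.toGroup.of _

end CommGroup

/-- The family `(c12, c21)` of Dehn twists about the two boundary components. -/
def boundaryTwist : Fin 2 → G120 := ![PresentedGroup.of 3, PresentedGroup.of 4]

theorem pairwise_commute_boundaryTwist : Pairwise (Function.onFun Commute boundaryTwist) := by
  simp [pairwise_fin_succ_iff, Function.onFun, boundaryTwist, commute_c12_c21, commute_c12_c21.symm]

/-- The homomorphism to `ℤ²` with `b ↦ (1, 0)` and `c12 ↦ (0, 1)`, which detects the independence of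
`c12` and `c21`. -/
def toIntProd : G120 →* Multiplicative (ℤ × ℤ) :=
  toCommGroup (Multiplicative.ofAdd (1, 0)) (Multiplicative.ofAdd (0, 1))

theorem toAdd_toIntProd_boundaryTwist :
    (fun i => (toIntProd (boundaryTwist i)).toAdd) = ![(0, 1), (12, -1)] := by
  funext i
  fin_cases i
  · exact congrArg Multiplicative.toAdd (toCommGroup_c12 _ _)
  · exact congrArg Multiplicative.toAdd (toCommGroup_c21 _ _)

theorem linearIndependent_toIntProd_boundaryTwist :
    LinearIndependent ℤ fun i => (toIntProd (boundaryTwist i)).toAdd := by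
  rw [toAdd_toIntProd_boundaryTwist, LinearIndependent.pair_iff]
  intro m n h
  obtain ⟨h_fst, h_snd⟩ : n * 12 = 0 ∧ m - n = 0 := by simpa [sub_eq_add_neg] using h
  omega

end G120

/-- Proposition 10 (second part): the homomorphism `ℤ² → PMod(1,2,0)` sending the standard
basis elements to `c12, c21` is injective, i.e. `c12, c21` generate a free abelian subgroup
of rank 2. -/
theorem stmt_12 :
    ∃ f : Multiplicative (Fin 2 → ℤ) →* G120,
      f (u 0) = PresentedGroup.of 3 ∧
      f (u 1) = PresentedGroup.of 4 ∧
      Function.Injective f := by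
  exact ⟨commutingFamilyHom G120.boundaryTwist G120.pairwise_commute_boundaryTwist,
    commutingFamilyHom_ofAdd_single _ 0,
    commutingFamilyHom_ofAdd_single _ 1,
    commutingFamilyHom_injective _ G120.toIntProd G120.linearIndependent_toIntProd_boundaryTwist⟩
end
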